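/- arXiv:1212.6825 — 3 statements merged into one kernel-verified Lean document; each statement's English description precedes it below -/
import Mathlib

section
/- Let q = p^a be a power of an odd prime p, let d be a prime number with d dividing p−1, let ω be an element of order d in (ℤ/qℤ)^×, let A = ⟨ω⟩, and let X = A·1. Then for every y ∈ ℤ/qℤ there exist complex numbers z_1, …, z_{d−1}, each of modulus 1, such that σ_X(y) = z_1 + z_2 + ⋯ + z_{d−1} + (z_1 z_2 ⋯ z_{d−1})^{−1}. (This set is the filled hypocycloid bounded by the d-cusped curve θ ↦ (d−1)e^{iθ} + e^{i(d−1)θ}.) -/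
open Complex

/-- `e(θ) = exp(2πiθ)`. -/
noncomputable def e2 (θ : ℝ) : ℂ := Complex.exp (2 * Real.pi * Complex.I * θ)

/-- The cyclic supercharacter attached to a subset `X` of `ℤ/nℤ`:
`σ_X(y) = Σ_{x ∈ X} e(xy/n)`. -/
noncomputable def superchar (n : ℕ) (X : Set (ZMod n)) (y : ZMod n) : ℂ :=
  ∑ᶠ x ∈ X, e2 (((x.val * y.val : ℕ) : ℝ) / (n : ℝ))

/-- The orbit `Ar = {ar : a ∈ A}` of `r` under a unit subgroup `A`. -/
def unitOrbit (n : ℕ) (A : Subgroup (ZMod n)ˣ) (r : ZMod n) : Set (ZMod n) :=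
  (fun a : (ZMod n)ˣ => (a : ZMod n) * r) '' (A : Set (ZMod n)ˣ)

/-!
The orbit `X = Ar` is stable under multiplication by every `u ∈ A`, so its sum `S` satisfies
`uS = S`; as soon as some `u - 1` is invertible, `S = 0`. The `|X|` unit complex numbers
`e(xy/n)`, `x ∈ X`, then have product `e(Sy/n) = 1`, so each of them is the inverse of the product
of the others.

Modulo `p ^ a`, an element `ω ≠ 1` of order prime to `p` has `ω - 1` invertible: otherwise `ω - 1`
is nilpotent, but `1` is a simple root of `X ^ d - 1`, hence its only root congruent to `1` modulo
nilpotents.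
-/

theorem exists_sum_eq_sum_add_inv_prod {ι K : Type*} [Field K] {s : Finset ι} (hs : s.Nonempty)
    {f : ι → K} (hf : ∏ i ∈ s, f i = 1) :
    ∃ t : Fin (s.card - 1) → ι, ∑ i ∈ s, f i = ∑ j, f (t j) + (∏ j, f (t j))⁻¹ := by
  classical
  obtain ⟨i₀, hi₀⟩ := hs
  let t := ((s.erase i₀).equivFinOfCardEq (Finset.card_erase_of_mem hi₀)).symm
  have hsum : ∑ j, f (t j) = ∑ i ∈ s.erase i₀, f i := by
    rw [t.sum_comp fun i => f i, Finset.sum_coe_sort]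
  have hprod : ∏ j, f (t j) = ∏ i ∈ s.erase i₀, f i := by
    rw [t.prod_comp fun i => f i, Finset.prod_coe_sort]
  have hinv : f i₀ = (∏ i ∈ s.erase i₀, f i)⁻¹ :=
    eq_inv_of_mul_eq_one_right ((Finset.prod_erase_mul s f hi₀).trans hf)
  exact ⟨fun j => t j, by rw [hsum, hprod, ← hinv, Finset.sum_erase_add s f hi₀]⟩

theorem addChar_map_sum_eq_prod {ι G M : Type*} [AddCommMonoid G] [CommMonoid M] (ψ : AddChar G M)
    (f : ι → G) (s : Finset ι) : ψ (∑ i ∈ s, f i) = ∏ i ∈ s, ψ (f i) :=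
  map_prod ψ.toMonoidHom (fun i => Multiplicative.ofAdd (f i)) s

theorem sum_eq_zero_of_forall_mul_mem {R : Type*} [Ring R] {s : Finset R} {u : Rˣ}
    (hs : ∀ x ∈ s, u * x ∈ s) (hu : IsUnit ((u : R) - 1)) : ∑ x ∈ s, x = 0 := by
  have hinj : Set.InjOn (fun x : R => u * x) s := u.isUnit.mul_right_injective.injOn
  have hinv : u * ∑ x ∈ s, x = ∑ x ∈ s, x := by
    rw [Finset.mul_sum]
    exact Finset.sum_nbij (fun x => u * x) hs hinj
      (Finset.surjOn_of_injOn_of_card_le _ hs hinj le_rfl) fun _ _ => rfl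
  rw [← hu.mul_right_eq_zero, sub_one_mul, hinv, sub_self]

open Polynomial in
theorem eq_one_of_pow_eq_one_of_isNilpotent_sub_one {R : Type*} [CommRing R] {x : R} {d : ℕ}
    (hd : IsUnit (d : R)) (hx : x ^ d = 1) (hnil : IsNilpotent (x - 1)) : x = 1 := by
  let P : R[X] := X ^ d - 1
  have hroot : aeval (1 : R) P = 0 := by simp [P]
  have hsimple : IsUnit (aeval (1 : R) P.derivative) := by
    simpa [P, derivative_X_pow] using hd
  have hnil' : IsNilpotent (1 - x) := by rwa [← neg_sub, isNilpotent_neg_iff]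
  exact (existsUnique_nilpotent_sub_and_aeval_eq_zero (hroot ▸ .zero) hsimple).unique
    ⟨hnil', by simp [P, hx]⟩ ⟨by simp, hroot⟩

theorem isUnit_or_isNilpotent_zmod_prime_pow {p : ℕ} (hp : p.Prime) {a : ℕ} (x : ZMod (p ^ a)) :
    IsUnit x ∨ IsNilpotent x := by
  have : NeZero (p ^ a) := ⟨pow_ne_zero _ hp.ne_zero⟩
  rw [← ZMod.natCast_zmod_val x]
  by_cases hpx : p ∣ x.val
  · refine .inr ⟨a, ?_⟩
    rw [← Nat.cast_pow, ZMod.natCast_eq_zero_iff]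
    exact pow_dvd_pow_of_dvd hpx a
  · exact .inl ((ZMod.isUnit_iff_coprime _ _).2
      (((hp.coprime_iff_not_dvd.2 hpx).symm).pow_right a))

theorem coprime_of_dvd_sub_one {m d : ℕ} (hm : 1 ≤ m) (hd : d ∣ m - 1) : d.Coprime m :=
  ((Nat.coprime_self_sub_left hm).2 (Nat.coprime_one_left m)).coprime_dvd_left hd

theorem isUnit_sub_one_of_coprime_orderOf {p : ℕ} (hp : p.Prime) {a : ℕ} {ω : (ZMod (p ^ a))ˣ}
    (hω : (orderOf ω).Coprime p) (hω₁ : orderOf ω ≠ 1) : IsUnit ((ω : ZMod (p ^ a)) - 1) := by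
  refine (isUnit_or_isNilpotent_zmod_prime_pow hp _).resolve_right fun hnil =>
    hω₁ (orderOf_eq_one_iff.2 (Units.ext ?_))
  have hpow : (ω : ZMod (p ^ a)) ^ orderOf ω = 1 := by
    rw [← Units.val_pow_eq_pow_val, pow_orderOf_eq_one, Units.val_one]
  exact eq_one_of_pow_eq_one_of_isNilpotent_sub_one
    ((ZMod.isUnit_iff_coprime _ _).2 (hω.pow_right a)) hpow hnil

section Orbit

variable {n : ℕ} {A : Subgroup (ZMod n)ˣ} {r : ZMod n}

theorem unitOrbit_nonempty : (unitOrbit n A r).Nonempty :=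
  (OneMemClass.coe_nonempty A).image _

theorem mul_mem_unitOrbit {u : (ZMod n)ˣ} (hu : u ∈ A) {x : ZMod n} (hx : x ∈ unitOrbit n A r) :
    u * x ∈ unitOrbit n A r := by
  obtain ⟨v, hv, rfl⟩ := hx
  exact ⟨u * v, A.mul_mem hu hv, by simp only [Units.val_mul, mul_assoc]⟩

theorem ncard_unitOrbit_zpowers (hr : IsUnit r) (u : (ZMod n)ˣ) :
    (unitOrbit n (Subgroup.zpowers u) r).ncard = orderOf u :=
  (Set.ncard_image_of_injective _ (hr.mul_left_injective.comp Units.val_injective)).trans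
    (Nat.card_zpowers u)

end Orbit

section Superchar

variable {n : ℕ} [NeZero n]

theorem e2_val_mul_val_div (x y : ZMod n) :
    e2 (((x.val * y.val : ℕ) : ℝ) / (n : ℝ)) = ZMod.stdAddChar (x * y) := by
  have hxy : x * y = ((x.val * y.val : ℕ) : ℤ) := by
    rw [Int.cast_natCast, Nat.cast_mul, ZMod.natCast_zmod_val, ZMod.natCast_zmod_val]
  rw [hxy, ZMod.stdAddChar_coe, e2]
  push_cast
  ring_nf

theorem superchar_coe_finset (s : Finset (ZMod n)) (y : ZMod n) :
    superchar n s y = ∑ x ∈ s, ZMod.stdAddChar (x * y) := by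
  simp only [superchar, e2_val_mul_val_div, finsum_mem_coe_finset]

theorem exists_superchar_eq_of_sum_eq_zero {s : Finset (ZMod n)} (hs : s.Nonempty)
    (hsum : ∑ x ∈ s, x = 0) (y : ZMod n) :
    ∃ z : Fin (s.card - 1) → ℂ, (∀ i, ‖z i‖ = 1) ∧
      superchar n s y = (∑ i, z i) + (∏ i, z i)⁻¹ := by
  have hprod : ∏ x ∈ s, ZMod.stdAddChar (x * y) = 1 := by
    rw [← addChar_map_sum_eq_prod, ← Finset.sum_mul, hsum, zero_mul, AddChar.map_zero_eq_one]
  obtain ⟨t, ht⟩ := exists_sum_eq_sum_add_inv_prod hs hprod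
  exact ⟨fun i => ZMod.stdAddChar (t i * y), fun i => AddChar.norm_apply _ _,
    (superchar_coe_finset s y).trans ht⟩

end Superchar

theorem stmt0_general {n d : ℕ} [NeZero n] {A : Subgroup (ZMod n)ˣ} {r : ZMod n}
    (hd : (unitOrbit n A r).ncard = d) {u : (ZMod n)ˣ} (hu : u ∈ A)
    (hu₁ : IsUnit ((u : ZMod n) - 1)) (y : ZMod n) :
    ∃ z : Fin (d - 1) → ℂ, (∀ i, ‖z i‖ = 1) ∧
      superchar n (unitOrbit n A r) y = (∑ i, z i) + (∏ i, z i)⁻¹ := by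
  obtain ⟨s, hs⟩ := (unitOrbit n A r).toFinite.exists_finset_coe
  have hne : s.Nonempty := by
    rw [← Finset.coe_nonempty, hs]
    exact unitOrbit_nonempty
  have hmul : ∀ x ∈ s, u * x ∈ s := by
    simp only [← Finset.mem_coe, hs]
    exact fun _ => mul_mem_unitOrbit hu
  have hcard : s.card = d := by rw [← Set.ncard_coe_finset, hs, hd]
  rw [← hs, ← hcard]
  exact exists_superchar_eq_of_sum_eq_zero hne (sum_eq_zero_of_forall_mul_mem hmul hu₁) y

theorem stmt0 (p a d : ℕ) (hp : p.Prime) (hodd : Odd p) (ha : 0 < a)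
    (hd : d.Prime) (hdvd : d ∣ p - 1)
    (ω : (ZMod (p ^ a))ˣ) (hω : orderOf ω = d)
    (y : ZMod (p ^ a)) :
    ∃ z : Fin (d - 1) → ℂ, (∀ i, ‖z i‖ = 1) ∧
      superchar (p ^ a) (unitOrbit (p ^ a) (Subgroup.zpowers ω) 1) y
        = (∑ i, z i) + (∏ i, z i)⁻¹ := by
  subst hω
  have : NeZero (p ^ a) := ⟨pow_ne_zero _ hp.ne_zero⟩
  exact stmt0_general (ncard_unitOrbit_zpowers isUnit_one ω) (Subgroup.mem_zpowers ω)
    (isUnit_sub_one_of_coprime_orderOf hp (coprime_of_dvd_sub_one hp.one_le hdvd) hd.ne_one) y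
end

section
/- Let A be a subgroup of (ℤ/nℤ)^×, let r ∈ ℤ/nℤ satisfy gcd(r, n) = n/d for some positive divisor d of n, and let ψ_d : ℤ/nℤ → ℤ/dℤ be the natural ring homomorphism. Then the image of σ_{Ar} (on ℤ/nℤ), the image of σ_{A·(n/d)} (on ℤ/nℤ), and the image of σ_{ψ_d(A)·1} (on ℤ/dℤ) are all equal as subsets of ℂ. -/
/-!
If `f : ℤ/nℤ → ℤ/dℤ` and `g : ℤ/dℤ → ℤ/nℤ` are adjoint for the pairings `(x, y) ↦ e(xy/n)` and
`(x, y) ↦ e(xy/d)`, then `σ_{g(X)} = σ_X ∘ f`, so the two images agree as soon as `f` is surjective.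
Multiplication by a unit is its own adjoint, and `r` is a unit multiple of `gcd(r, n) = n/d`, which
gives the first equality. Reduction `ℤ/nℤ → ℤ/dℤ` is adjoint to multiplication by `n/d`, viewed as a
map `ℤ/dℤ → ℤ/nℤ`, which gives the second.
-/

open Complex

section CharAdjoint

variable {n d : ℕ} [NeZero n] [NeZero d]

lemma superchar_eq_finsum_stdAddChar (X : Set (ZMod n)) (y : ZMod n) :
    superchar n X y = ∑ᶠ x ∈ X, ZMod.stdAddChar (x * y) := by
  refine finsum_mem_congr rfl fun x _ => ?_
  have hxy : x * y = ((x.val * y.val : ℤ) : ZMod n) := by simp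
  rw [hxy, ZMod.stdAddChar_coe, e2]
  push_cast
  ring_nf

lemma eq_of_forall_stdAddChar_mul_eq {a b : ZMod n}
    (h : ∀ y, ZMod.stdAddChar (a * y) = ZMod.stdAddChar (b * y)) : a = b :=
  AddChar.to_mulShift_inj_of_isPrimitive (ZMod.isPrimitive_stdAddChar n) (DFunLike.ext _ _ h)

/-- `g` is adjoint to `f` for the pairings `(x, y) ↦ e(xy/n)` on `ℤ/nℤ` and `(x, y) ↦ e(xy/d)` on
`ℤ/dℤ`. Supercharacters are transported along such pairs. Additivity of both maps is not part of the
definition, since it follows from the nondegeneracy of the pairings. -/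
def IsCharAdjoint (g : ZMod d → ZMod n) (f : ZMod n → ZMod d) : Prop :=
  ∀ x y, ZMod.stdAddChar (g x * y) = ZMod.stdAddChar (x * f y)

namespace IsCharAdjoint

variable {g : ZMod d → ZMod n} {f : ZMod n → ZMod d}

lemma injective (h : IsCharAdjoint g f) (hf : Function.Surjective f) : Function.Injective g := by
  intro x x' hxx'
  refine eq_of_forall_stdAddChar_mul_eq (hf.forall.2 fun y => ?_)
  rw [← h, ← h, hxx']

lemma superchar_image (h : IsCharAdjoint g f) (hf : Function.Surjective f) (X : Set (ZMod d)) :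
    superchar n (g '' X) = superchar d X ∘ f := by
  ext y
  simp only [Function.comp_apply, superchar_eq_finsum_stdAddChar,
    finsum_mem_image (h.injective hf).injOn, h _ y]

variable {φ : (ZMod n)ˣ →* (ZMod d)ˣ}

lemma map_units_mul (h : IsCharAdjoint g f)
    (hφ : ∀ (a : (ZMod n)ˣ) y, f (a * y) = φ a * f y) (a : (ZMod n)ˣ) (s : ZMod d) :
    g (φ a * s) = a * g s := by
  refine eq_of_forall_stdAddChar_mul_eq fun y => ?_
  calc ZMod.stdAddChar (g (φ a * s) * y)
      = ZMod.stdAddChar ((φ a : ZMod d) * s * f y) := h _ _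
    _ = ZMod.stdAddChar (s * f (a * y)) := by rw [hφ, mul_assoc, mul_left_comm]
    _ = ZMod.stdAddChar (g s * ((a : ZMod n) * y)) := (h _ _).symm
    _ = ZMod.stdAddChar ((a : ZMod n) * g s * y) := by rw [mul_left_comm, mul_assoc]

lemma image_unitOrbit (h : IsCharAdjoint g f)
    (hφ : ∀ (a : (ZMod n)ˣ) y, f (a * y) = φ a * f y) (A : Subgroup (ZMod n)ˣ) (s : ZMod d) :
    g '' unitOrbit d (A.map φ) s = unitOrbit n A (g s) := by
  simp only [unitOrbit, Subgroup.coe_map, Set.image_image, h.map_units_mul hφ]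

theorem range_superchar_unitOrbit (h : IsCharAdjoint g f) (hf : Function.Surjective f)
    (hφ : ∀ (a : (ZMod n)ˣ) y, f (a * y) = φ a * f y) (A : Subgroup (ZMod n)ˣ) (s : ZMod d) :
    Set.range (superchar n (unitOrbit n A (g s))) =
      Set.range (superchar d (unitOrbit d (A.map φ) s)) := by
  rw [← h.image_unitOrbit hφ, h.superchar_image hf, hf.range_comp]

end IsCharAdjoint

end CharAdjoint

section UnitMultiple

variable {n : ℕ} [NeZero n]

lemma isCharAdjoint_mul_left (a : ZMod n) : IsCharAdjoint (a * ·) (a * ·) := by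
  intro x y
  rw [mul_assoc, mul_left_comm]

theorem range_superchar_unitOrbit_units_mul (A : Subgroup (ZMod n)ˣ) (u : (ZMod n)ˣ)
    (s : ZMod n) :
    Set.range (superchar n (unitOrbit n A (u * s))) =
      Set.range (superchar n (unitOrbit n A s)) := by
  have h := (isCharAdjoint_mul_left (u : ZMod n)).range_superchar_unitOrbit (φ := MonoidHom.id _)
    u.mulLeft_bijective.surjective (fun a y => mul_left_comm _ _ _) A s
  rwa [Subgroup.map_id] at h

lemma gcd_val_units_mul_natCast (u : (ZMod n)ˣ) (m : ℕ) :
    Nat.gcd (u * m : ZMod n).val n = Nat.gcd m n := by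
  have hum : (u * m : ZMod n) = ((u.val.val * m : ℕ) : ZMod n) := by simp
  rw [hum, ZMod.val_natCast, ← Nat.gcd_rec, Nat.gcd_comm,
    Nat.Coprime.gcd_mul_left_cancel _ (ZMod.val_coe_unit_coprime u)]

lemma exists_units_mul_gcd_val_eq (r : ZMod n) :
    ∃ u : (ZMod n)ˣ, u * (Nat.gcd r.val n : ZMod n) = r := by
  obtain ⟨m, hm, _, ⟨u, rfl⟩, rfl⟩ := r.eq_unit_mul_divisor
  exact ⟨u, by rw [gcd_val_units_mul_natCast, Nat.gcd_eq_left hm]⟩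

end UnitMultiple

section Reduction

variable {n d : ℕ} [NeZero n] [NeZero d]

lemma stdAddChar_natCast_div_mul (hdvd : d ∣ n) (z : ZMod n) :
    ZMod.stdAddChar (((n / d : ℕ) : ZMod n) * z) =
      ZMod.stdAddChar (ZMod.castHom hdvd (ZMod d) z) := by
  obtain ⟨k, rfl⟩ := ZMod.intCast_surjective z
  have hn : (n : ℂ) ≠ 0 := NeZero.ne _
  have hd : (d : ℂ) ≠ 0 := NeZero.ne _
  have hmk : ((n / d : ℕ) : ZMod n) * k = (((n / d : ℕ) * k : ℤ) : ZMod n) := by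
    rw [Int.cast_mul, Int.cast_natCast]
  rw [hmk, map_intCast (ZMod.castHom hdvd (ZMod d)), ZMod.stdAddChar_coe, ZMod.stdAddChar_coe]
  congr 1
  rw [Int.cast_mul, Int.cast_natCast, Nat.cast_div hdvd hd]
  field_simp

/-- The map `ℤ/dℤ → ℤ/nℤ` induced by multiplication by `n/d`, whose image is the `d`-torsion of
`ℤ/nℤ`, when `d ∣ n`. It is the adjoint of reduction modulo `d`. -/
def torsionInclusion (n d : ℕ) (x : ZMod d) : ZMod n :=
  (n / d : ℕ) * x.val

lemma isCharAdjoint_torsionInclusion (hdvd : d ∣ n) :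
    IsCharAdjoint (torsionInclusion n d) (ZMod.castHom hdvd (ZMod d)) := by
  intro x y
  rw [torsionInclusion, mul_assoc, stdAddChar_natCast_div_mul hdvd, map_mul, map_natCast,
    ZMod.natCast_zmod_val]

lemma torsionInclusion_one (hdvd : d ∣ n) : torsionInclusion n d 1 = (n / d : ℕ) :=
  eq_of_forall_stdAddChar_mul_eq fun y => by
    rw [isCharAdjoint_torsionInclusion hdvd, one_mul, stdAddChar_natCast_div_mul hdvd]

theorem range_superchar_unitOrbit_natCast_div (hdvd : d ∣ n) (A : Subgroup (ZMod n)ˣ) :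
    Set.range (superchar n (unitOrbit n A ((n / d : ℕ) : ZMod n))) =
      Set.range (superchar d (unitOrbit d
        (A.map (Units.map (ZMod.castHom hdvd (ZMod d)).toMonoidHom)) 1)) := by
  rw [← torsionInclusion_one hdvd]
  exact (isCharAdjoint_torsionInclusion hdvd).range_superchar_unitOrbit
    (ZMod.castHom_surjective hdvd) (fun a y => map_mul _ _ _) A 1

end Reduction

theorem stmt2 (n d : ℕ) (hn : 0 < n) (hd : 0 < d) (hdvd : d ∣ n)
    (A : Subgroup (ZMod n)ˣ) (r : ZMod n)
    (hr : Nat.gcd r.val n = n / d) :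
    Set.range (superchar n (unitOrbit n A r))
      = Set.range (superchar n (unitOrbit n A ((n / d : ℕ) : ZMod n)))
    ∧ Set.range (superchar n (unitOrbit n A r))
      = Set.range (superchar d (unitOrbit d
          (A.map (Units.map (ZMod.castHom hdvd (ZMod d)).toMonoidHom)) 1)) := by
  have : NeZero n := ⟨hn.ne'⟩
  have : NeZero d := ⟨hd.ne'⟩
  obtain ⟨u, hu⟩ := exists_units_mul_gcd_val_eq r
  rw [hr] at hu
  have hunit : Set.range (superchar n (unitOrbit n A r)) =
      Set.range (superchar n (unitOrbit n A ((n / d : ℕ) : ZMod n))) := by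
    rw [← hu, range_superchar_unitOrbit_units_mul]
  exact ⟨hunit, hunit.trans (range_superchar_unitOrbit_natCast_div hdvd A)⟩
end

section
/- Let q = p^a be a power of an odd prime p, let d be a positive divisor of p−1, let ω be an element of multiplicative order d in (ℤ/qℤ)^×, let A = ⟨ω⟩, and let X = A·1. For 0 ≤ k ≤ d−1 and 0 ≤ j ≤ φ(d)−1, let b_{k,j} ∈ ℤ be the coefficients of the remainder of t^k upon division by the d-th cyclotomic polynomial Φ_d(t) in ℤ[t], i.e., t^k ≡ Σ_{j=0}^{φ(d)−1} b_{k,j} t^j (mod Φ_d(t)). Then for every y ∈ ℤ/qℤ there exist complex numbers z_1, …, z_{φ(d)} of modulus 1 such that σ_X(y) = Σ_{k=0}^{d−1} ∏_{j=0}^{φ(d)−1} z_{j+1}^{b_{k,j}}. That is, the image of σ_X is contained in the image of the function g : 𝕋^{φ(d)} → ℂ, g(z_1,…,z_{φ(d)}) = Σ_{k=0}^{d−1} ∏_{j=0}^{φ(d)−1} z_{j+1}^{b_{k,j}}, where 𝕋 is the unit circle. -/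
/-!
Over a local ring in which `d` is invertible, the powers `ζ ^ c` of a primitive `d`-th root of unity
with `c < d` differ from `1` by a unit: if `u ^ d = 1` and `u ≡ 1` modulo the maximal ideal, the
geometric sum `1 + u + ⋯ + u ^ (d - 1) ≡ d` is a unit annihilating `u - 1`. Since
`0 = ζ ^ d - 1 = ∏_{c ∣ d} Φ_c(ζ)` and each `Φ_c(ζ)` with `c < d` divides the unit `ζ ^ c - 1`, it
follows that `Φ_d(ζ) = 0`. Applied to `ω`, this turns the congruences `t ^ k ≡ ∑ b_{k,j} t ^ j`
modulo `Φ_d` into identities `ω ^ k = ∑ b_{k,j} ω ^ j` in `ℤ/qℤ`, and evaluating the additive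
character `x ↦ e(xy/q)` on them gives the claim with `z_{j+1} = e(ω ^ j y / q)`.
-/

open Complex

section CyclotomicRoots

open Polynomial

theorem eq_one_of_pow_eq_one_of_not_isUnit_sub_one {R : Type*} [CommRing R] [IsLocalRing R]
    {d : ℕ} (hd : IsUnit (d : R)) {u : R} (hu : u ^ d = 1) (hu1 : ¬ IsUnit (u - 1)) : u = 1 := by
  have hdvd : u - 1 ∣ (d : R) - ∑ i ∈ Finset.range d, u ^ i := by
    have hsum : (d : R) - ∑ i ∈ Finset.range d, u ^ i = ∑ i ∈ Finset.range d, (1 - u ^ i) := by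
      simp [Finset.sum_sub_distrib]
    rw [hsum]
    exact Finset.dvd_sum fun i _ => dvd_sub_comm.1 (sub_one_dvd_pow_sub_one u i)
  have hgeom : IsUnit (∑ i ∈ Finset.range d, u ^ i) := by
    rw [← add_sub_cancel (∑ i ∈ Finset.range d, u ^ i) (d : R)] at hd
    exact (IsLocalRing.isUnit_or_isUnit_of_isUnit_add hd).resolve_right
      fun h => hu1 (isUnit_of_dvd_unit hdvd h)
  have hzero : (∑ i ∈ Finset.range d, u ^ i) * (u - 1) = 0 := by
    rw [geom_sum_mul, hu, sub_self]
  exact sub_eq_zero.1 (hgeom.mul_right_eq_zero.1 hzero)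

theorem aeval_cyclotomic_eq_zero_of_isUnit_pow_sub_one {R : Type*} [CommRing R] {d : ℕ}
    (hd : 0 < d) {ζ : R} (hζ : ζ ^ d = 1) (hunit : ∀ c ∈ d.properDivisors, IsUnit (ζ ^ c - 1)) :
    aeval ζ (cyclotomic d ℤ) = 0 := by
  have hproper : IsUnit (∏ c ∈ d.properDivisors, aeval ζ (cyclotomic c ℤ)) := by
    refine IsUnit.prod_iff.2 fun c hc => isUnit_of_dvd_unit ?_ (hunit c hc)
    simpa using map_dvd (aeval ζ) (cyclotomic.dvd_X_pow_sub_one c ℤ)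
  have hprod : aeval ζ (cyclotomic d ℤ) * ∏ c ∈ d.properDivisors, aeval ζ (cyclotomic c ℤ) = 0 := by
    have h := congrArg (aeval ζ) (prod_cyclotomic_eq_X_pow_sub_one hd ℤ)
    rw [← Nat.cons_self_properDivisors hd.ne', Finset.prod_cons, map_mul, map_prod] at h
    simpa [hζ] using h
  exact hproper.mul_left_eq_zero.1 hprod

theorem aeval_cyclotomic_eq_zero_of_isPrimitiveRoot {R : Type*} [CommRing R] [IsLocalRing R]
    {d : ℕ} (hd : IsUnit (d : R)) {ζ : R} (hζ : IsPrimitiveRoot ζ d) :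
    aeval ζ (cyclotomic d ℤ) = 0 := by
  have hd0 : 0 < d := Nat.pos_of_ne_zero fun h => hd.ne_zero (by simp [h])
  refine aeval_cyclotomic_eq_zero_of_isUnit_pow_sub_one hd0 hζ.pow_eq_one fun c hc => ?_
  obtain ⟨hcd, hlt⟩ := Nat.mem_properDivisors.1 hc
  by_contra hnot
  refine hζ.pow_ne_one_of_pos_of_lt (Nat.pos_of_dvd_of_pos hcd hd0).ne' hlt
    (eq_one_of_pow_eq_one_of_not_isUnit_sub_one hd ?_ hnot)
  rw [pow_right_comm, hζ.pow_eq_one, one_pow]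

theorem isLocalRing_zmod_prime_pow {p e : ℕ} (hp : p.Prime) (he : 0 < e) :
    IsLocalRing (ZMod (p ^ e)) := by
  have : Fact (1 < p ^ e) := ⟨Nat.one_lt_pow he.ne' hp.one_lt⟩
  refine IsLocalRing.of_nonunits_add fun a b ha hb => ?_
  obtain ⟨m, rfl⟩ := ZMod.natCast_zmod_surjective a
  obtain ⟨n, rfl⟩ := ZMod.natCast_zmod_surjective b
  rw [← Nat.cast_add]
  simp only [mem_nonunits_iff, ZMod.isUnit_natCast_iff_not_dvd_pow hp he, not_not] at ha hb ⊢
  exact dvd_add ha hb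

theorem not_dvd_of_dvd_sub_one {p d : ℕ} (hp : 1 < p) (hd : d ∣ p - 1) : ¬ p ∣ d := fun h =>
  Nat.not_dvd_of_pos_of_lt (Nat.sub_pos_of_lt hp) (Nat.sub_one_lt_of_lt hp) (h.trans hd)

theorem aeval_cyclotomic_orderOf_eq_zero {p e : ℕ} (hp : p.Prime) (he : 0 < e)
    {ω : (ZMod (p ^ e))ˣ} (hω : ¬ p ∣ orderOf ω) :
    aeval (ω : ZMod (p ^ e)) (cyclotomic (orderOf ω) ℤ) = 0 :=
  have := isLocalRing_zmod_prime_pow hp he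
  aeval_cyclotomic_eq_zero_of_isPrimitiveRoot
    ((ZMod.isUnit_natCast_iff_not_dvd_pow hp he).2 hω)
    (IsPrimitiveRoot.coe_units_iff.2 (IsPrimitiveRoot.orderOf ω))

theorem pow_eq_sum_zsmul_pow_of_modByMonic_eq {R : Type*} [CommRing R] {f : ℤ[X]} {x : R}
    (hx : aeval x f = 0) {k m : ℕ} {b : Fin m → ℤ}
    (hb : (X : ℤ[X]) ^ k %ₘ f = ∑ j : Fin m, C (b j) * (X : ℤ[X]) ^ (j : ℕ)) :
    x ^ k = ∑ j : Fin m, b j • x ^ (j : ℕ) := by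
  have h := aeval_modByMonic_eq_self_of_root (p := X ^ k) hx
  rw [hb] at h
  simpa using h.symm

end CyclotomicRoots

section Supercharacters

theorem addChar_sum_zsmul {ι A M : Type*} [AddCommGroup A] [DivisionCommMonoid M]
    (ψ : AddChar A M) (s : Finset ι) (b : ι → ℤ) (x : ι → A) :
    ψ (∑ i ∈ s, b i • x i) = ∏ i ∈ s, ψ (x i) ^ b i := by
  simp only [← AddChar.map_zsmul_eq_zpow]
  exact map_prod ψ.toMonoidHom (fun i => Multiplicative.ofAdd (b i • x i)) s

variable {n : ℕ} [NeZero n]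

theorem superchar_unitOrbit (A : Subgroup (ZMod n)ˣ) {r : ZMod n} (hr : IsUnit r) (y : ZMod n) :
    superchar n (unitOrbit n A r) y =
      ∑ᶠ a : A, ZMod.stdAddChar (((a : (ZMod n)ˣ) : ZMod n) * (r * y)) := by
  have hinj : Set.InjOn (fun a : (ZMod n)ˣ => (a : ZMod n) * r) A :=
    fun a _ b _ h => Units.ext (hr.mul_left_injective h)
  simp only [superchar, unitOrbit, finsum_mem_image hinj, e2_val_mul_val_div, mul_assoc]
  exact (finsum_set_coe_eq_finsum_mem (A : Set (ZMod n)ˣ)).symm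

theorem superchar_unitOrbit_zpowers (ω : (ZMod n)ˣ) {r : ZMod n} (hr : IsUnit r) (y : ZMod n) :
    superchar n (unitOrbit n (Subgroup.zpowers ω) r) y =
      ∑ k : Fin (orderOf ω), ZMod.stdAddChar ((ω : ZMod n) ^ (k : ℕ) * (r * y)) := by
  rw [superchar_unitOrbit _ hr, ← finsum_comp_equiv (finEquivZPowers (isOfFinOrder_of_finite ω)),
    finsum_eq_sum_of_fintype]
  simp [finEquivZPowers_apply]

end Supercharacters

open Polynomial in
theorem stmt17_general {n d : ℕ} [NeZero n] {ω : (ZMod n)ˣ} (hω : orderOf ω = d)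
    (hroot : aeval (ω : ZMod n) (cyclotomic d ℤ) = 0) {r : ZMod n} (hr : IsUnit r)
    {b : Fin d → Fin (Nat.totient d) → ℤ}
    (hb : ∀ k : Fin d, (X : ℤ[X]) ^ (k : ℕ) %ₘ cyclotomic d ℤ
        = ∑ j : Fin (Nat.totient d), C (b k j) * (X : ℤ[X]) ^ (j : ℕ))
    (y : ZMod n) :
    ∃ z : Fin (Nat.totient d) → ℂ, (∀ j, ‖z j‖ = 1) ∧
      superchar n (unitOrbit n (Subgroup.zpowers ω) r) y
        = ∑ k : Fin d, ∏ j : Fin (Nat.totient d), z j ^ (b k j) := by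
  subst hω
  refine ⟨fun j => ZMod.stdAddChar ((ω : ZMod n) ^ (j : ℕ) * (r * y)),
    fun j => AddChar.norm_apply _ _, ?_⟩
  rw [superchar_unitOrbit_zpowers ω hr]
  refine Finset.sum_congr rfl fun k _ => ?_
  simp only [pow_eq_sum_zsmul_pow_of_modByMonic_eq hroot (hb k), Finset.sum_mul, smul_mul_assoc,
    addChar_sum_zsmul]

open Polynomial in
theorem stmt17 (p e d : ℕ) (hp : p.Prime) (hodd : Odd p) (he : 0 < e)
    (hd : 0 < d) (hdvd : d ∣ p - 1)
    (ω : (ZMod (p ^ e))ˣ) (hω : orderOf ω = d)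
    (b : Fin d → Fin (Nat.totient d) → ℤ)
    (hb : ∀ k : Fin d, (X : ℤ[X]) ^ (k : ℕ) %ₘ Polynomial.cyclotomic d ℤ
        = ∑ j : Fin (Nat.totient d), Polynomial.C (b k j) * (X : ℤ[X]) ^ (j : ℕ))
    (y : ZMod (p ^ e)) :
    ∃ z : Fin (Nat.totient d) → ℂ, (∀ j, ‖z j‖ = 1) ∧
      superchar (p ^ e) (unitOrbit (p ^ e) (Subgroup.zpowers ω) 1) y
        = ∑ k : Fin d, ∏ j : Fin (Nat.totient d), z j ^ (b k j) := by
  have : NeZero (p ^ e) := ⟨pow_ne_zero e hp.ne_zero⟩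
  have hroot := aeval_cyclotomic_orderOf_eq_zero hp he
    (not_dvd_of_dvd_sub_one hp.one_lt (hω ▸ hdvd))
  exact stmt17_general hω (hω ▸ hroot) isUnit_one hb y
end
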